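/- Let n ≥ 1 and let S be a unital star subalgebra of Matrix (Fin n) (Fin n) ℂ. Then there exist ℓ ≥ 1, positive integers n_1,…,n_ℓ and m_1,…,m_ℓ with Σ_{i=1}^ℓ n_i·m_i = n, a bijection e : Fin n ≃ (Σ i : Fin ℓ, Fin n_i × Fin m_i), and a unitary matrix U ∈ Matrix (Fin n) (Fin n) ℂ, such that for every M ∈ Matrix (Fin n) (Fin n) ℂ: M ∈ S if and only if there exist matrices B i ∈ Matrix (Fin n_i) (Fin n_i) ℂ (i : Fin ℓ) with (Uᴴ * M * U), reindexed along e, equal to blockDiagonal' (fun i => B i ⊗ₖ (1 : Matrix (Fin m_i) (Fin m_i) ℂ)). -/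

import Mathlib

open Matrix Kronecker

/-!
Let `S` act on `V = ℂⁿ`. Orthogonal complements of `S`-submodules are `S`-submodules, so `V` is
semisimple; let `Wᵢ` be its pairwise non-isomorphic simple constituents. The adjoint of an
`S`-linear map is `S`-linear, so Schur's lemma makes `⟪f x, g y⟫` a scalar multiple of `⟪x, y⟫` for
`S`-linear `f g : Wᵢ → V`, and zero if `f` and `g` start from different constituents. Hence
`Hom_S(Wᵢ, V)` has a basis `Fᵢⱼ` of isometries with mutually orthogonal ranges, and the vectors
`Fᵢⱼ aᵢₐ`, for orthonormal bases `aᵢ` of the `Wᵢ`, form an orthonormal basis of `V`. Jacobson's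
density theorem identifies `S` with the operators acting by a single matrix `Bᵢ` on the `aᵢₐ`,
independently of `j`, which are block diagonal with blocks `Bᵢ ⊗ 1`.
-/

section Isotypic

variable {A V : Type*} [Ring A] [AddCommGroup V] [Module A V]

theorem isotypicComponent_le_iSup_range (p : Submodule A V) :
    isotypicComponent A V p ≤ ⨆ f : p →ₗ[A] V, LinearMap.range f := by
  refine sSup_le fun q ⟨e⟩ => ?_
  have hq : LinearMap.range (q.subtype ∘ₗ e.symm.toLinearMap) = q := by simp [LinearMap.range_comp]
  exact hq.symm.trans_le (le_iSup (fun f : p →ₗ[A] V => LinearMap.range f) _)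

variable (A V) in
theorem exists_simple_submodules_iSup_range_eq_top [IsSemisimpleModule A V] [IsNoetherian A V] :
    ∃ (ℓ : ℕ) (p : Fin ℓ → Submodule A V), (∀ i, IsSimpleModule A (p i)) ∧
      (Pairwise fun i j => IsEmpty (p i ≃ₗ[A] p j)) ∧
      ⨆ f : Σ i, p i →ₗ[A] V, LinearMap.range f.2 = ⊤ := by
  obtain ⟨ℓ, ⟨φ⟩⟩ := Finite.exists_equiv_fin (isotypicComponents A V)
  choose p hp hφ using fun i => (φ.symm i).2
  refine ⟨ℓ, p, hp, fun i j hij => ⟨fun e => hij ?_⟩, top_le_iff.1 ?_⟩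
  · exact φ.symm.injective (Subtype.ext ((hφ i).trans (e.isotypicComponent_eq.trans (hφ j).symm)))
  · rw [← sSup_isotypicComponents A V, iSup_sigma]
    refine sSup_le fun c hc => ?_
    have hc' : c = isotypicComponent A V (p (φ ⟨c, hc⟩)) := by rw [← hφ, φ.symm_apply_apply]
    exact hc'.trans_le ((isotypicComponent_le_iSup_range _).trans
      (le_iSup (fun i => ⨆ f : p i →ₗ[A] V, LinearMap.range f) (φ ⟨c, hc⟩)))

end Isotypic

section Density

variable {k A V : Type*} [CommRing k] [Ring A] [Algebra k A] [AddCommGroup V] [Module k V]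
  [Module A V] [IsScalarTower k A V]

theorem mem_range_lsmul_of_forall_commute [IsSemisimpleModule A V]
    [Module.Finite (Module.End A V) V] {M : Module.End k V}
    (hM : ∀ (c : Module.End A V) (v : V), M (c v) = c (M v)) :
    M ∈ (Algebra.lsmul k k V : A →ₐ[k] Module.End k V).range := by
  let M' : Module.End (Module.End A V) V := { M with map_smul' := hM }
  obtain ⟨a, ha⟩ := Module.Finite.toModuleEnd_moduleEnd_surjective M'
  exact ⟨a, LinearMap.ext fun v => LinearMap.congr_fun ha v⟩

theorem mem_range_lsmul_iff_exists_map_apply [IsSemisimpleModule A V]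
    [Module.Finite (Module.End A V) V] {ι : Type*} {W : ι → Type*} [∀ i, AddCommGroup (W i)]
    [∀ i, Module k (W i)] [∀ i, Module A (W i)] [∀ i, IsScalarTower k A (W i)]
    (hW : ⨆ f : Σ i, W i →ₗ[A] V, LinearMap.range f.2 = ⊤) {M : Module.End k V} :
    M ∈ (Algebra.lsmul k k V : A →ₐ[k] Module.End k V).range ↔
      ∃ T : ∀ i, Module.End k (W i), ∀ i (f : W i →ₗ[A] V) (x : W i), M (f x) = f (T i x) := by
  constructor
  · rintro ⟨a, rfl⟩
    exact ⟨fun i => Algebra.lsmul k k (W i) a, fun i f x => (f.map_smul a x).symm⟩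
  · rintro ⟨T, hT⟩
    refine mem_range_lsmul_of_forall_commute fun c v => ?_
    have hv : v ∈ ⨆ f : Σ i, W i →ₗ[A] V, LinearMap.range f.2 := hW ▸ Submodule.mem_top
    induction hv using Submodule.iSup_induction' with
    | mem f v hv =>
      obtain ⟨x, rfl⟩ := hv
      rw [hT, ← LinearMap.comp_apply, hT, LinearMap.comp_apply]
    | zero => simp
    | add v w _ _ hv hw => simp only [map_add, hv, hw]

end Density

theorem toMatrix_eq_blockDiagonal'_kronecker_one_iff {R V ι : Type*} {ν κ : ι → Type*}
    [CommRing R] [AddCommGroup V] [Module R V] [Fintype ι] [DecidableEq ι] [∀ i, Fintype (ν i)]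
    [∀ i, DecidableEq (ν i)] [∀ i, Fintype (κ i)] [∀ i, DecidableEq (κ i)]
    (b : Module.Basis (Σ i, ν i × κ i) R V) (M : Module.End R V) (B : ∀ i, Matrix (ν i) (ν i) R) :
    LinearMap.toMatrix b b M = blockDiagonal' (fun i => B i ⊗ₖ (1 : Matrix (κ i) (κ i) R)) ↔
      ∀ i α j, M (b ⟨i, α, j⟩) = ∑ β, B i β α • b ⟨i, β, j⟩ := by
  have hsum (i α j) : toLin b b (blockDiagonal' fun i => B i ⊗ₖ (1 : Matrix (κ i) (κ i) R))
      (b ⟨i, α, j⟩) = ∑ β, B i β α • b ⟨i, β, j⟩ := by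
    rw [toLin_self, Fintype.sum_sigma, Fintype.sum_eq_single i fun i' hi' => by
      simp [blockDiagonal'_apply_ne _ _ _ hi']]
    simp [Fintype.sum_prod_type, one_apply, ite_smul]
  rw [← (toLin b b).injective.eq_iff, toLin_toMatrix]
  constructor
  · intro h i α j
    rw [← hsum, ← h]
  · exact fun h => b.ext fun ⟨i, α, j⟩ => (h i α j).trans (hsum i α j).symm

section IsotypicFrame

variable {k A V : Type*} [CommRing k] [Ring A] [Algebra k A] [AddCommGroup V] [Module k V]
  [Module A V] [IsScalarTower k A V]

theorem map_apply_toLin_iff {ν κ W : Type*} [Fintype ν] [DecidableEq ν] [AddCommGroup W]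
    [Module k W] [Module A W] [IsScalarTower k A W] (a : Module.Basis ν k W)
    (F : Module.Basis κ k (W →ₗ[A] V)) (M : Module.End k V) (B : Matrix ν ν k) :
    (∀ (f : W →ₗ[A] V) (x : W), M (f x) = f (toLin a a B x)) ↔
      ∀ α j, M (F j (a α)) = ∑ β, B β α • F j (a β) := by
  have hF (j : κ) (α : ν) : F j (toLin a a B (a α)) = ∑ β, B β α • F j (a β) := by
    simp only [toLin_self, map_sum, LinearMap.map_smul_of_tower]
  constructor
  · intro h α j
    rw [h, hF]
  · intro h f x
    have hx (j : κ) : M (F j x) = F j (toLin a a B x) :=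
      LinearMap.congr_fun (f := M ∘ₗ (F j).restrictScalars k)
        (g := (F j).restrictScalars k ∘ₗ toLin a a B)
        (a.ext fun α => (h α j).trans (hF j α).symm) x
    exact LinearMap.congr_fun (f := M ∘ₗ LinearMap.applyₗ' k x)
      (g := LinearMap.applyₗ' k (toLin a a B x)) (F.ext hx) f

variable {ι : Type*} {ν κ W : ι → Type*} [∀ i, AddCommGroup (W i)] [∀ i, Module A (W i)]

/-- The images of the vectors `a i α ⊗ F i j` under the evaluation map
`⨁ i, W i ⊗ Hom_A(W i, V) → V`. -/
def isotypicFrame (a : ∀ i, ν i → W i) (F : ∀ i, κ i → W i →ₗ[A] V) :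
    (Σ i, ν i × κ i) → V :=
  fun x => F x.1 x.2.2 (a x.1 x.2.1)

variable [∀ i, Module k (W i)] [∀ i, IsScalarTower k A (W i)]

theorem span_range_isotypicFrame_eq_top {a : ∀ i, ν i → W i} {F : ∀ i, κ i → W i →ₗ[A] V}
    (hW : ⨆ f : Σ i, W i →ₗ[A] V, LinearMap.range f.2 = ⊤)
    (ha : ∀ i, Submodule.span k (Set.range (a i)) = ⊤)
    (hF : ∀ i, Submodule.span k (Set.range (F i)) = ⊤) :
    Submodule.span k (Set.range (isotypicFrame a F)) = ⊤ := by
  refine Submodule.eq_top_iff'.2 fun v => ?_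
  have hv : v ∈ ⨆ f : Σ i, W i →ₗ[A] V, LinearMap.range f.2 := hW ▸ Submodule.mem_top
  induction hv using Submodule.iSup_induction' with
  | mem f v hv =>
    obtain ⟨i, f⟩ := f
    obtain ⟨x, rfl⟩ := hv
    refine LinearMap.BilinMap.apply_apply_mem_of_mem_span _ (Set.range (F i)) (Set.range (a i))
      (LinearMap.restrictScalarsₗ k A (W i) V k) ?_ f x (hF i ▸ Submodule.mem_top)
      (ha i ▸ Submodule.mem_top)
    rintro _ ⟨j, rfl⟩ _ ⟨α, rfl⟩
    exact Submodule.subset_span ⟨⟨i, α, j⟩, rfl⟩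
  | zero => exact zero_mem _
  | add v w _ _ hv hw => exact add_mem hv hw

theorem mem_range_lsmul_iff_exists_toMatrix_eq [Fintype ι] [DecidableEq ι] [∀ i, Fintype (ν i)]
    [∀ i, DecidableEq (ν i)] [∀ i, Fintype (κ i)] [∀ i, DecidableEq (κ i)]
    [IsSemisimpleModule A V] [Module.Finite (Module.End A V) V]
    (hW : ⨆ f : Σ i, W i →ₗ[A] V, LinearMap.range f.2 = ⊤) (a : ∀ i, Module.Basis (ν i) k (W i))
    (F : ∀ i, Module.Basis (κ i) k (W i →ₗ[A] V)) {b : Module.Basis (Σ i, ν i × κ i) k V}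
    (hb : ⇑b = isotypicFrame (fun i => a i) (fun i => F i)) {M : Module.End k V} :
    M ∈ (Algebra.lsmul k k V : A →ₐ[k] Module.End k V).range ↔
      ∃ B : ∀ i, Matrix (ν i) (ν i) k, LinearMap.toMatrix b b M =
        blockDiagonal' fun i => B i ⊗ₖ (1 : Matrix (κ i) (κ i) k) := by
  rw [mem_range_lsmul_iff_exists_map_apply hW,
    (Equiv.piCongrRight fun i => (toLin (a i) (a i)).toEquiv).surjective.exists]
  refine exists_congr fun B => ?_
  rw [toMatrix_eq_blockDiagonal'_kronecker_one_iff, hb]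
  exact forall_congr' fun i => map_apply_toLin_iff (a i) (F i) M (B i)

end IsotypicFrame

/-- The maps `F j` are isometries with mutually orthogonal ranges. -/
def IsOrthoisometric (𝕜 : Type*) {A V W κ : Type*} [RCLike 𝕜] [Ring A] [NormedAddCommGroup V]
    [InnerProductSpace 𝕜 V] [Module A V] [NormedAddCommGroup W] [InnerProductSpace 𝕜 W]
    [Module A W] [DecidableEq κ] (F : κ → W →ₗ[A] V) : Prop :=
  ∀ j k x y, inner 𝕜 (F j x) (F k y) = if j = k then inner 𝕜 x y else 0

/-- The star ring `A` acts on the inner product space `V` compatibly with its star operation: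
`star a` acts as the adjoint of `a`. -/
class IsStarAction (𝕜 A V : Type*) [RCLike 𝕜] [Star A] [NormedAddCommGroup V]
    [InnerProductSpace 𝕜 V] [SMul A V] : Prop where
  inner_smul_left_eq (a : A) (x y : V) : inner 𝕜 (a • x) y = inner 𝕜 x (star a • y)

namespace IsStarAction

theorem isSemisimpleModule (𝕜 A V : Type*) [RCLike 𝕜] [Ring A] [Algebra 𝕜 A] [StarRing A]
    [NormedAddCommGroup V] [InnerProductSpace 𝕜 V] [FiniteDimensional 𝕜 V] [Module A V]
    [IsScalarTower 𝕜 A V] [IsStarAction 𝕜 A V] : IsSemisimpleModule A V := by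
  refine { exists_isCompl := fun p => ?_ }
  let q : Submodule A V :=
    { (p.restrictScalars 𝕜)ᗮ with
      smul_mem' := fun a x hx u hu => by
        simpa only [inner_smul_left_eq, star_star] using hx (star a • u) (p.smul_mem _ hu) }
  have h : IsCompl (p.restrictScalars 𝕜) (q.restrictScalars 𝕜) :=
    Submodule.isCompl_orthogonal (p.restrictScalars 𝕜)
  refine ⟨q, ?_⟩
  rw [isCompl_iff, Submodule.disjoint_def, Submodule.codisjoint_iff_exists_add_eq] at h ⊢
  exact h

section Intertwiners

variable {𝕜 A V W : Type*} [RCLike 𝕜] [Ring A] [Algebra 𝕜 A] [StarRing A]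
  [NormedAddCommGroup V] [InnerProductSpace 𝕜 V] [Module A V] [IsScalarTower 𝕜 A V]
  [IsStarAction 𝕜 A V]

instance restrictScalars (p : Submodule A V) : IsStarAction 𝕜 A (p.restrictScalars 𝕜) :=
  ⟨fun a x y => inner_smul_left_eq a (x : V) (y : V)⟩

variable [FiniteDimensional 𝕜 V] [NormedAddCommGroup W] [InnerProductSpace 𝕜 W]
  [FiniteDimensional 𝕜 W] [Module A W] [IsScalarTower 𝕜 A W] [IsStarAction 𝕜 A W]

theorem adjoint_map_smul (f : W →ₗ[A] V) (a : A) (v : V) :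
    (f.restrictScalars 𝕜).adjoint (a • v) = a • (f.restrictScalars 𝕜).adjoint v := by
  refine ext_inner_right 𝕜 fun w => ?_
  simp only [LinearMap.adjoint_inner_left, inner_smul_left_eq, LinearMap.restrictScalars_apply,
    map_smul]

variable (𝕜) in
/-- The adjoint of an `A`-linear map between star actions, which is again `A`-linear. -/
noncomputable def adjoint (f : W →ₗ[A] V) : V →ₗ[A] W :=
  { (f.restrictScalars 𝕜).adjoint with
    map_smul' := adjoint_map_smul f }

theorem inner_adjoint_right (f : W →ₗ[A] V) (w : W) (v : V) :
    inner 𝕜 w (adjoint 𝕜 f v) = inner 𝕜 (f w) v :=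
  LinearMap.adjoint_inner_right (f.restrictScalars 𝕜) w v

theorem inner_map_map_eq_zero {W' : Type*} [AddCommGroup W'] [Module A W'] [IsSimpleModule A W]
    [IsSimpleModule A W'] (h : IsEmpty (W' ≃ₗ[A] W)) (f : W →ₗ[A] V) (g : W' →ₗ[A] V) (x : W)
    (y : W') : inner 𝕜 (f x) (g y) = 0 := by
  have hfg : adjoint 𝕜 f ∘ₗ g = 0 := by
    by_contra hne
    exact h.elim (LinearEquiv.ofBijective _ (LinearMap.bijective_of_ne_zero hne))
  rw [← inner_adjoint_right, ← LinearMap.comp_apply, hfg, LinearMap.zero_apply, inner_zero_right]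

theorem orthonormal_isotypicFrame {ι : Type*} {ν κ W : ι → Type*} [∀ i, DecidableEq (κ i)]
    [∀ i, NormedAddCommGroup (W i)] [∀ i, InnerProductSpace 𝕜 (W i)]
    [∀ i, FiniteDimensional 𝕜 (W i)] [∀ i, Module A (W i)] [∀ i, IsScalarTower 𝕜 A (W i)]
    [∀ i, IsStarAction 𝕜 A (W i)] [∀ i, IsSimpleModule A (W i)]
    {a : ∀ i, ν i → W i} {F : ∀ i, κ i → W i →ₗ[A] V}
    (hW : Pairwise fun i j => IsEmpty (W i ≃ₗ[A] W j)) (ha : ∀ i, Orthonormal 𝕜 (a i))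
    (hF : ∀ i, IsOrthoisometric 𝕜 (F i)) : Orthonormal 𝕜 (isotypicFrame a F) := by
  classical
  rw [orthonormal_iff_ite]
  rintro ⟨i, α, j⟩ ⟨i', α', j'⟩
  by_cases h : i = i'
  · subst h
    simp only [isotypicFrame, hF i _ _ _ _, orthonormal_iff_ite.1 (ha i), Sigma.mk.injEq,
      heq_eq_eq, true_and, Prod.mk.injEq, ← ite_and, and_comm]
  · simp only [isotypicFrame, Sigma.mk.injEq, h, false_and, if_false]
    exact inner_map_map_eq_zero (hW (Ne.symm h)) _ _ _ _

end Intertwiners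

variable {A V W : Type*} [Ring A] [Algebra ℂ A] [StarRing A]
  [NormedAddCommGroup V] [InnerProductSpace ℂ V] [FiniteDimensional ℂ V]
  [Module A V] [IsScalarTower ℂ A V] [IsStarAction ℂ A V]

section Schur

variable [NormedAddCommGroup W] [InnerProductSpace ℂ W] [FiniteDimensional ℂ W]
  [Module A W] [IsScalarTower ℂ A W] [IsStarAction ℂ A W] [IsSimpleModule A W]

theorem exists_inner_map_map_eq_mul (f g : W →ₗ[A] V) :
    ∃ c : ℂ, ∀ x y, inner ℂ (f x) (g y) = c * inner ℂ x y := by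
  obtain ⟨c, hc⟩ :=
    (IsSimpleModule.algebraMap_end_bijective_of_isAlgClosed ℂ).2 (adjoint ℂ f ∘ₗ g)
  refine ⟨c, fun x y => ?_⟩
  rw [← inner_adjoint_right, ← LinearMap.comp_apply, ← hc, Module.algebraMap_end_apply,
    inner_smul_right]

-- Evaluation at a unit vector `u` embeds the space of intertwiners into `V`, and by Schur's lemma
-- the inner products of the values at `u` determine those of all values.
variable (A V W) in
theorem exists_isOrthoisometric_basis :
    ∃ (m : ℕ) (F : Module.Basis (Fin m) ℂ (W →ₗ[A] V)), IsOrthoisometric ℂ F := by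
  have := IsSimpleModule.nontrivial A W
  obtain ⟨u, hu⟩ := exists_norm_eq W zero_le_one
  have huu : inner ℂ u u = (1 : ℂ) := by simp [inner_self_eq_norm_sq_to_K, hu]
  have hu0 : u ≠ 0 := norm_ne_zero_iff.1 (hu.trans_ne one_ne_zero)
  let ev : (W →ₗ[A] V) →ₗ[ℂ] V := LinearMap.applyₗ' ℂ u
  have hev : Function.Injective ev := (injective_iff_map_eq_zero ev).2 fun f hf => by
    by_contra hne
    exact hu0 ((map_eq_zero_iff f (LinearMap.injective_of_ne_zero hne)).1 hf)
  let b := stdOrthonormalBasis ℂ (LinearMap.range ev)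
  let F := b.toBasis.map (LinearEquiv.ofInjective ev hev).symm
  have hF (j) : F j u = b j := congrArg Subtype.val
    ((LinearEquiv.ofInjective ev hev).apply_symm_apply (b j))
  refine ⟨_, F, fun j k x y => ?_⟩
  obtain ⟨c, hc⟩ := exists_inner_map_map_eq_mul (F j) (F k)
  have hcu : c = if j = k then 1 else 0 := by
    rw [← orthonormal_iff_ite.1 b.orthonormal j k, Submodule.coe_inner, ← hF, ← hF, hc, huu,
      mul_one]
  rw [hc, hcu, ite_mul, one_mul, zero_mul]

end Schur

end IsStarAction

theorem toMatrixOrthonormal_eq_conjTranspose_mul_mul {𝕜 E ι : Type*} [RCLike 𝕜]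
    [NormedAddCommGroup E] [InnerProductSpace 𝕜 E] [FiniteDimensional 𝕜 E] [Fintype ι]
    [DecidableEq ι] (a b : OrthonormalBasis ι 𝕜 E) (f : E →ₗ[𝕜] E) :
    f.toMatrixOrthonormal b =
      (a.toBasis.toMatrix b)ᴴ * f.toMatrixOrthonormal a * a.toBasis.toMatrix b := by
  have hconj : b.toBasis.toMatrix a = (a.toBasis.toMatrix b)ᴴ := by
    ext i j
    simp [Module.Basis.toMatrix_apply, OrthonormalBasis.repr_apply_apply]
  rw [← hconj]
  exact (basis_toMatrix_mul_linearMap_toMatrix_mul_basis_toMatrix b.toBasis a.toBasis b.toBasis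
    a.toBasis f).symm

theorem IsStarAction.exists_orthonormalBasis_mem_range_lsmul_iff {A V : Type*} [Ring A]
    [Algebra ℂ A] [StarRing A] [NormedAddCommGroup V] [InnerProductSpace ℂ V]
    [FiniteDimensional ℂ V] [Module A V] [IsScalarTower ℂ A V] [IsStarAction ℂ A V] :
    ∃ (ℓ : ℕ) (nn mm : Fin ℓ → ℕ), (∀ i, 0 < nn i) ∧ (∀ i, 0 < mm i) ∧
      ∃ b : OrthonormalBasis (Σ i, Fin (nn i) × Fin (mm i)) ℂ V, ∀ M : V →ₗ[ℂ] V,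
        M ∈ (Algebra.lsmul ℂ ℂ V : A →ₐ[ℂ] Module.End ℂ V).range ↔
          ∃ B : ∀ i, Matrix (Fin (nn i)) (Fin (nn i)) ℂ,
            M.toMatrixOrthonormal b =
              blockDiagonal' fun i => B i ⊗ₖ (1 : Matrix (Fin (mm i)) (Fin (mm i)) ℂ) := by
  have := isSemisimpleModule ℂ A V
  have : IsNoetherian A V := isNoetherian_of_tower ℂ inferInstance
  have : Module.Finite (Module.End A V) V := .of_restrictScalars_finite ℂ _ V
  obtain ⟨ℓ, p, hp, hiso, hgen⟩ := exists_simple_submodules_iSup_range_eq_top A V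
  let W (i : Fin ℓ) := (p i).restrictScalars ℂ
  have hW (i : Fin ℓ) : IsSimpleModule A (W i) := hp i
  have hnt (i : Fin ℓ) : Nontrivial (W i) := IsSimpleModule.nontrivial A (W i)
  choose mm F hF using fun i => exists_isOrthoisometric_basis A V (W i)
  let a (i : Fin ℓ) := stdOrthonormalBasis ℂ (W i)
  have hmm (i : Fin ℓ) : 0 < mm i := by
    have : Nontrivial (W i →ₗ[A] V) := ⟨(p i).subtype, 0, fun h => ?_⟩
    · exact Fin.pos_iff_nonempty.2 (F i).index_nonempty
    · obtain ⟨w, hw⟩ := exists_ne (0 : W i)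
      exact hw (Subtype.ext (LinearMap.congr_fun h w))
  let b : OrthonormalBasis (Σ i, Fin (Module.finrank ℂ (W i)) × Fin (mm i)) ℂ V :=
    OrthonormalBasis.mk
      (orthonormal_isotypicFrame (W := fun i => W i) hiso (fun i => (a i).orthonormal) hF)
      (span_range_isotypicFrame_eq_top hgen (fun i => (a i).toBasis.span_eq)
        fun i => (F i).span_eq).ge
  have hb : ⇑b.toBasis = isotypicFrame (fun i => (a i).toBasis) fun i => F i :=
    b.coe_toBasis.trans (OrthonormalBasis.coe_mk _ _)
  exact ⟨ℓ, _, mm, fun i => Module.finrank_pos, hmm, b, fun M =>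
    mem_range_lsmul_iff_exists_toMatrix_eq hgen (fun i => (a i).toBasis) F hb⟩

theorem exists_orthonormalBasis_mem_starSubalgebra_iff {V : Type*} [NormedAddCommGroup V]
    [InnerProductSpace ℂ V] [FiniteDimensional ℂ V] (S : StarSubalgebra ℂ (V →ₗ[ℂ] V)) :
    ∃ (ℓ : ℕ) (nn mm : Fin ℓ → ℕ), (∀ i, 0 < nn i) ∧ (∀ i, 0 < mm i) ∧
      ∃ b : OrthonormalBasis (Σ i, Fin (nn i) × Fin (mm i)) ℂ V, ∀ M : V →ₗ[ℂ] V,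
        M ∈ S ↔ ∃ B : ∀ i, Matrix (Fin (nn i)) (Fin (nn i)) ℂ,
          M.toMatrixOrthonormal b =
            blockDiagonal' fun i => B i ⊗ₖ (1 : Matrix (Fin (mm i)) (Fin (mm i)) ℂ) := by
  have : IsScalarTower ℂ S V := ⟨fun _ _ _ => rfl⟩
  have : IsStarAction ℂ S V := ⟨fun a x y => (LinearMap.adjoint_inner_right a.1 x y).symm⟩
  obtain ⟨ℓ, nn, mm, hnn, hmm, b, hb⟩ :=
    IsStarAction.exists_orthonormalBasis_mem_range_lsmul_iff (A := S) (V := V)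
  refine ⟨ℓ, nn, mm, hnn, hmm, b, fun M => Iff.trans ?_ (hb M)⟩
  exact ⟨fun hM => ⟨⟨M, hM⟩, rfl⟩, fun ⟨a, ha⟩ => ha ▸ a.2⟩

theorem wedderburn_decomposition_general {ι : Type*} [Fintype ι] [DecidableEq ι] [Nonempty ι]
    (S : StarSubalgebra ℂ (Matrix ι ι ℂ)) :
    ∃ (ℓ : ℕ) (_ : 1 ≤ ℓ) (nn mm : Fin ℓ → ℕ) (_ : ∀ i, 0 < nn i) (_ : ∀ i, 0 < mm i)
      (_ : ∑ i, nn i * mm i = Fintype.card ι)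
      (e : ι ≃ (Σ i : Fin ℓ, Fin (nn i) × Fin (mm i)))
      (U : Matrix ι ι ℂ),
      U ∈ Matrix.unitaryGroup ι ℂ ∧
      ∀ M : Matrix ι ι ℂ,
        M ∈ S ↔ ∃ B : (i : Fin ℓ) → Matrix (Fin (nn i)) (Fin (nn i)) ℂ,
          Matrix.reindex e e (Uᴴ * M * U) =
            Matrix.blockDiagonal' (fun i => B i ⊗ₖ (1 : Matrix (Fin (mm i)) (Fin (mm i)) ℂ)) := by
  let E := EuclideanSpace.basisFun ι ℂ
  let Φ := LinearMap.toMatrixOrthonormal E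
  obtain ⟨ℓ, nn, mm, hnn, hmm, b, hb⟩ := exists_orthonormalBasis_mem_starSubalgebra_iff
    (S.comap (Φ : (EuclideanSpace ℂ ι →ₗ[ℂ] EuclideanSpace ℂ ι) →⋆ₐ[ℂ] Matrix ι ι ℂ))
  let e : ι ≃ Σ i : Fin ℓ, Fin (nn i) × Fin (mm i) := E.toBasis.indexEquiv b.toBasis
  have hℓ : 1 ≤ ℓ := (e (Classical.arbitrary ι)).1.pos
  have hcard : ∑ i, nn i * mm i = Fintype.card ι := by simp [Fintype.card_congr e]
  refine ⟨ℓ, hℓ, nn, mm, hnn, hmm, hcard, e, E.toBasis.toMatrix (b.reindex e.symm),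
    E.toMatrix_orthonormalBasis_mem_unitary _, fun M => ?_⟩
  have hbe : (b.reindex e.symm).reindex e = b :=
    DFunLike.coe_injective (by simp [OrthonormalBasis.coe_reindex, Function.comp_assoc])
  obtain ⟨f, rfl⟩ : ∃ f, Φ f = M := EquivLike.surjective Φ M
  rw [← toMatrixOrthonormal_eq_conjTranspose_mul_mul, ← LinearMap.toMatrixOrthonormal_reindex, hbe]
  exact hb f

/-- Wedderburn decomposition theorem for matrix *-algebras (Theorem 1). -/
theorem wedderburn_decomposition (n : ℕ) (hn : 1 ≤ n)
    (S : StarSubalgebra ℂ (Matrix (Fin n) (Fin n) ℂ)) :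
    ∃ (ℓ : ℕ) (_ : 1 ≤ ℓ) (nn mm : Fin ℓ → ℕ) (_ : ∀ i, 0 < nn i) (_ : ∀ i, 0 < mm i)
      (_ : ∑ i, nn i * mm i = n)
      (e : Fin n ≃ (Σ i : Fin ℓ, Fin (nn i) × Fin (mm i)))
      (U : Matrix (Fin n) (Fin n) ℂ),
      U ∈ Matrix.unitaryGroup (Fin n) ℂ ∧
      ∀ M : Matrix (Fin n) (Fin n) ℂ,
        M ∈ S ↔ ∃ B : (i : Fin ℓ) → Matrix (Fin (nn i)) (Fin (nn i)) ℂ,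
          Matrix.reindex e e (Uᴴ * M * U) =
            Matrix.blockDiagonal' (fun i => B i ⊗ₖ (1 : Matrix (Fin (mm i)) (Fin (mm i)) ℂ)) := by
  have : Nonempty (Fin n) := ⟨⟨0, hn⟩⟩
  simpa only [Fintype.card_fin] using wedderburn_decomposition_general S
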